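/- Let D be a digraph with m arcs and minimum outdegree d ≥ 4, let X, Y be a partition of V(D) with e(X) = 0, set θ := min{|θ(X₁,X₂)| : X₁,X₂ a partition of X}, X' := {x ∈ X : s(x) ≥ θ}, g := Σ_{x∈X∖X'} s(x), and b := (1/2)·Σ_{x∈X}(d(x) − s(x)). Let ε > 0 and suppose every y ∈ Y satisfies d(y) ≤ ε²m/4, and suppose |X'| = 2k+1 with k ≥ 1. Then either there exists a bipartition V(D) = V₁ ∪ V₂ with min{e(V₁,V₂), e(V₂,V₁)} ≥ ((d−1)/(2(2d−1)) − ε)·m, or, writing X' = {v₁,…,v_{2k+1}} with Δⱼ := s(vⱼ) and Δ₁ ≥ Δ₂ ≥ … ≥ Δ_{2k+1}, one has b > ((d²+2d−1)/(d−1))·Σ_{j=k}^{2k−1} Δⱼ − d·(Σ_{j=1}^{k−1} Δⱼ + Δ_{2k} + Δ_{2k+1}) + (d−1)·g + ((d−1)/(2d))·e(Y). -/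

import Mathlib

open Finset

/-- Number of arcs of the digraph `A` directed from a vertex of `S` to a vertex of `T`. -/
def dArcs {V : Type} [Fintype V] [DecidableEq V] (A : V → V → Prop) [DecidableRel A]
    (S T : Finset V) : ℕ :=
  ((S ×ˢ T).filter fun p => A p.1 p.2).card

/-- Outdegree of `x`. -/
def outDeg {V : Type} [Fintype V] (A : V → V → Prop) [DecidableRel A] (x : V) : ℕ :=
  (Finset.univ.filter fun y => A x y).card

/-- Indegree of `x`. -/
def inDeg {V : Type} [Fintype V] (A : V → V → Prop) [DecidableRel A] (x : V) : ℕ :=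
  (Finset.univ.filter fun y => A y x).card

/-- Degree of `x`: outdegree plus indegree. -/
def deg {V : Type} [Fintype V] (A : V → V → Prop) [DecidableRel A] (x : V) : ℕ :=
  outDeg A x + inDeg A x

/-- `s(x) = max{d⁺(x) − d⁻(x), d⁻(x) − d⁺(x)}`. -/
def sVal {V : Type} [Fintype V] (A : V → V → Prop) [DecidableRel A] (x : V) : ℤ :=
  max ((outDeg A x : ℤ) - (inDeg A x : ℤ)) ((inDeg A x : ℤ) - (outDeg A x : ℤ))

/-- The gap `θ(X₁,X₂) = (e(X₁,Y)+e(Y,X₂)) − (e(X₂,Y)+e(Y,X₁))`. -/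
def gap {V : Type} [Fintype V] [DecidableEq V] (A : V → V → Prop) [DecidableRel A]
    (X₁ X₂ Y : Finset V) : ℤ :=
  ((dArcs A X₁ Y : ℤ) + (dArcs A Y X₂ : ℤ)) - ((dArcs A X₂ Y : ℤ) + (dArcs A Y X₁ : ℤ))

section Degrees

variable {V : Type} [Fintype V] {A : V → V → Prop} [DecidableRel A]

lemma sVal_nonneg (x : V) : 0 ≤ sVal A x := by
  rw [sVal]; omega

lemma sVal_le_card (x : V) : sVal A x ≤ Fintype.card V := by
  have h1 : outDeg A x ≤ Fintype.card V := Finset.card_le_univ _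
  have h2 : inDeg A x ≤ Fintype.card V := Finset.card_le_univ _
  rw [sVal]; omega

end Degrees

section Counting

variable {V : Type} [Fintype V] [DecidableEq V] (A : V → V → Prop) [DecidableRel A]

lemma dArcs_eq_sum (S T : Finset V) :
    dArcs A S T = ∑ u ∈ S, ∑ v ∈ T, if A u v then 1 else 0 := by
  rw [dArcs, Finset.card_filter, Finset.sum_product]

lemma not_arc_of_dArcs_eq_zero {X : Finset V} (h : dArcs A X X = 0) {x z : V} (hx : x ∈ X)
    (hz : z ∈ X) : ¬ A x z := by
  intro hA
  rw [dArcs, Finset.card_eq_zero] at h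
  have : (x, z) ∈ (X ×ˢ X).filter fun p => A p.1 p.2 := by simp [hx, hz, hA]
  simp [h] at this

variable {A} {X Y : Finset V}

lemma sum_univ_eq_sum_add_sum {M : Type*} [AddCommMonoid M] (hXY : X ∪ Y = Finset.univ)
    (hdXY : Disjoint X Y) (F : V → M) : ∑ v, F v = ∑ v ∈ X, F v + ∑ v ∈ Y, F v := by
  rw [← hXY, Finset.sum_union hdXY]

lemma outDeg_eq_sum (hXY : X ∪ Y = Finset.univ) (hdXY : Disjoint X Y) (heX : dArcs A X X = 0)
    {x : V} (hx : x ∈ X) : outDeg A x = ∑ y ∈ Y, if A x y then 1 else 0 := by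
  rw [outDeg, Finset.card_filter, sum_univ_eq_sum_add_sum hXY hdXY, Finset.sum_eq_zero, zero_add]
  intro z hz
  exact if_neg (not_arc_of_dArcs_eq_zero A heX hx hz)

lemma inDeg_eq_sum (hXY : X ∪ Y = Finset.univ) (hdXY : Disjoint X Y) (heX : dArcs A X X = 0)
    {x : V} (hx : x ∈ X) : inDeg A x = ∑ y ∈ Y, if A y x then 1 else 0 := by
  rw [inDeg, Finset.card_filter, sum_univ_eq_sum_add_sum hXY hdXY, Finset.sum_eq_zero, zero_add]
  intro z hz
  exact if_neg (not_arc_of_dArcs_eq_zero A heX hz hx)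

lemma dArcs_left_eq_sum_outDeg (hXY : X ∪ Y = Finset.univ) (hdXY : Disjoint X Y)
    (heX : dArcs A X X = 0) {S : Finset V} (hS : S ⊆ X) :
    dArcs A S Y = ∑ x ∈ S, outDeg A x := by
  rw [dArcs_eq_sum]
  exact Finset.sum_congr rfl fun x hx => (outDeg_eq_sum hXY hdXY heX (hS hx)).symm

lemma dArcs_right_eq_sum_inDeg (hXY : X ∪ Y = Finset.univ) (hdXY : Disjoint X Y)
    (heX : dArcs A X X = 0) {S : Finset V} (hS : S ⊆ X) :
    dArcs A Y S = ∑ x ∈ S, inDeg A x := by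
  rw [dArcs_eq_sum, Finset.sum_comm]
  exact Finset.sum_congr rfl fun x hx => (inDeg_eq_sum hXY hdXY heX (hS hx)).symm

lemma dArcs_univ_eq_sum_outDeg : dArcs A Finset.univ Finset.univ = ∑ x, outDeg A x := by
  rw [dArcs_eq_sum]
  exact Finset.sum_congr rfl fun x _ => by rw [outDeg, Finset.card_filter]

lemma dArcs_univ_eq_sum_inDeg : dArcs A Finset.univ Finset.univ = ∑ x, inDeg A x := by
  rw [dArcs_eq_sum, Finset.sum_comm]
  exact Finset.sum_congr rfl fun x _ => by rw [inDeg, Finset.card_filter]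

lemma dArcs_univ_eq (hXY : X ∪ Y = Finset.univ) (hdXY : Disjoint X Y)
    (heX : dArcs A X X = 0) :
    dArcs A Finset.univ Finset.univ = dArcs A Y Y + ∑ x ∈ X, deg A x := by
  have h1 : ∀ S : Finset V, dArcs A S Finset.univ = dArcs A S X + dArcs A S Y := by
    intro S
    simp only [dArcs_eq_sum, ← Finset.sum_add_distrib]
    exact Finset.sum_congr rfl fun u _ => sum_univ_eq_sum_add_sum hXY hdXY _
  have h2 : dArcs A Finset.univ Finset.univ = dArcs A X Finset.univ + dArcs A Y Finset.univ := by
    simp only [dArcs_eq_sum]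
    exact sum_univ_eq_sum_add_sum hXY hdXY _
  have h3 : ∑ x ∈ X, deg A x = ∑ x ∈ X, outDeg A x + ∑ x ∈ X, inDeg A x := by
    simp only [deg, Finset.sum_add_distrib]
  rw [h2, h1, h1, heX, dArcs_left_eq_sum_outDeg hXY hdXY heX subset_rfl,
    dArcs_right_eq_sum_inDeg hXY hdXY heX subset_rfl, h3]
  ring

lemma gap_eq_sum (hXY : X ∪ Y = Finset.univ) (hdXY : Disjoint X Y)
    (heX : dArcs A X X = 0) {S : Finset V} (hS : S ⊆ X) :
    gap A S (X \ S) Y =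
      ∑ x ∈ X, if x ∈ S then (outDeg A x : ℤ) - inDeg A x else (inDeg A x : ℤ) - outDeg A x := by
  rw [gap, dArcs_left_eq_sum_outDeg hXY hdXY heX hS,
    dArcs_left_eq_sum_outDeg hXY hdXY heX Finset.sdiff_subset,
    dArcs_right_eq_sum_inDeg hXY hdXY heX hS,
    dArcs_right_eq_sum_inDeg hXY hdXY heX Finset.sdiff_subset, ← Finset.sum_sdiff hS]
  have h1 : ∑ x ∈ X \ S, (if x ∈ S then (outDeg A x : ℤ) - inDeg A x
      else (inDeg A x : ℤ) - outDeg A x) = ∑ x ∈ X \ S, ((inDeg A x : ℤ) - outDeg A x) :=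
    Finset.sum_congr rfl fun x hx => if_neg (Finset.mem_sdiff.1 hx).2
  have h2 : ∑ x ∈ S, (if x ∈ S then (outDeg A x : ℤ) - inDeg A x
      else (inDeg A x : ℤ) - outDeg A x) = ∑ x ∈ S, ((outDeg A x : ℤ) - inDeg A x) :=
    Finset.sum_congr rfl fun x hx => if_pos hx
  rw [h1, h2, Finset.sum_sub_distrib, Finset.sum_sub_distrib]
  push_cast
  ring

end Counting

section Rounding

variable {V : Type} [Fintype V]

/-- The multilinear extension of the number of arcs leaving a vertex set: if every vertex `u` is
put independently into `V₁` with probability `x u`, the expected number of arcs from `V₁` to its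
complement. -/
def cutExt (A : V → V → Prop) [DecidableRel A] (x : V → ℝ) : ℝ :=
  ∑ u, ∑ v, (if A u v then (1 : ℝ) else 0) * (x u * (1 - x v))

/-- The partial derivative of `cutExt` in the coordinate `y`. -/
def cutDeriv (A : V → V → Prop) [DecidableRel A] (x : V → ℝ) (y : V) : ℝ :=
  (∑ v, (if A y v then (1 : ℝ) else 0) * (1 - x v)) - ∑ u, (if A u y then (1 : ℝ) else 0) * x u

variable {A : V → V → Prop} [DecidableRel A]

lemma abs_cutDeriv_le {x : V → ℝ} (hx : ∀ v, 0 ≤ x v ∧ x v ≤ 1) (y : V) :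
    |cutDeriv A x y| ≤ deg A y := by
  have h1 : 0 ≤ ∑ v, (if A y v then (1 : ℝ) else 0) * (1 - x v) :=
    Finset.sum_nonneg fun v _ => mul_nonneg (by split_ifs <;> simp) (by linarith [hx v])
  have h2 : 0 ≤ ∑ u, (if A u y then (1 : ℝ) else 0) * x u :=
    Finset.sum_nonneg fun v _ => mul_nonneg (by split_ifs <;> simp) (hx v).1
  have h3 : ∑ v, (if A y v then (1 : ℝ) else 0) * (1 - x v) ≤ outDeg A y := by
    rw [outDeg, Finset.card_filter]
    push_cast
    refine Finset.sum_le_sum fun v _ => ?_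
    split_ifs <;> linarith [hx v]
  have h4 : ∑ u, (if A u y then (1 : ℝ) else 0) * x u ≤ inDeg A y := by
    rw [inDeg, Finset.card_filter]
    push_cast
    refine Finset.sum_le_sum fun v _ => ?_
    split_ifs <;> linarith [hx v]
  rw [cutDeriv, deg, abs_le]
  push_cast
  constructor <;> linarith

variable [DecidableEq V]

lemma cutExt_update (hirr : ∀ v, ¬ A v v) (x : V → ℝ) (y : V) (t : ℝ) :
    cutExt A (Function.update x y t) = cutExt A x + (t - x y) * cutDeriv A x y := by
  have hup : ∀ u, Function.update x y t u = x u + (t - x y) * (if u = y then 1 else 0) := by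
    intro u
    by_cases h : u = y
    · subst h; simp
    · simp [h]
  have hexp : ∀ u v, (if A u v then (1 : ℝ) else 0) *
      ((x u + (t - x y) * (if u = y then 1 else 0)) *
        (1 - (x v + (t - x y) * (if v = y then 1 else 0)))) =
      (if A u v then (1 : ℝ) else 0) * (x u * (1 - x v))
      + (t - x y) * (if u = y then (if A u v then (1 : ℝ) else 0) * (1 - x v) else 0)
      - (t - x y) * (if v = y then (if A u v then (1 : ℝ) else 0) * x u else 0) := by
    intro u v
    by_cases hu : u = y <;> by_cases hv : v = y
    · have : ¬ A u v := by rw [hu, hv]; exact hirr y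
      simp [this]
    all_goals
      generalize (if A u v then (1 : ℝ) else 0) = a
      simp only [hu, hv, if_true, if_false]
      ring
  simp only [cutExt, hup, hexp, Finset.sum_sub_distrib, Finset.sum_add_distrib, ← Finset.mul_sum,
    cutDeriv]
  have h1 : ∑ u, ∑ v, (if u = y then (if A u v then (1 : ℝ) else 0) * (1 - x v) else 0)
      = ∑ v, (if A y v then (1 : ℝ) else 0) * (1 - x v) := by
    rw [Finset.sum_comm]
    exact Finset.sum_congr rfl fun v _ => by simp
  have h2 : ∑ u, ∑ v, (if v = y then (if A u v then (1 : ℝ) else 0) * x u else 0)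
      = ∑ u, (if A u y then (1 : ℝ) else 0) * x u :=
    Finset.sum_congr rfl fun u _ => by simp
  rw [h1, h2]
  ring

lemma cutExt_compl_update (hirr : ∀ v, ¬ A v v) (x : V → ℝ) (y : V) (t : ℝ) :
    cutExt A (1 - Function.update x y t) =
      cutExt A (1 - x) - (t - x y) * cutDeriv A (1 - x) y := by
  have : 1 - Function.update x y t = Function.update (1 - x) y (1 - t) := by
    ext u
    by_cases h : u = y
    · subst h; simp
    · simp [h]
  rw [this, cutExt_update hirr]
  simp only [Pi.sub_apply, Pi.one_apply]
  ring

/-- One coordinate of the random point can be rounded to `0` or `1` without increasing a sum of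
two squared deviations by more than its variance. -/
lemma exists_round_le {p : ℝ} (hp0 : 0 ≤ p) (hp1 : p ≤ 1) (α β D E : ℝ) :
    ∃ t : ℝ, (t = 0 ∨ t = 1) ∧
      (α + (t - p) * D) ^ 2 + (β - (t - p) * E) ^ 2 ≤ α ^ 2 + β ^ 2 + (D ^ 2 + E ^ 2) / 4 := by
  by_contra! h
  have h0 := h 0 (Or.inl rfl)
  have h1 := h 1 (Or.inr rfl)
  have hv : p * (1 - p) ≤ 1 / 4 := by nlinarith [sq_nonneg (p - 1 / 2)]
  have hDE : 0 ≤ D ^ 2 + E ^ 2 := by positivity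
  have key : p * ((α + (1 - p) * D) ^ 2 + (β - (1 - p) * E) ^ 2) +
      (1 - p) * ((α + (0 - p) * D) ^ 2 + (β - (0 - p) * E) ^ 2) =
      α ^ 2 + β ^ 2 + p * (1 - p) * (D ^ 2 + E ^ 2) := by ring
  have := mul_le_mul_of_nonneg_right hv hDE
  rcases hp0.eq_or_lt with rfl | hpos
  · nlinarith
  · nlinarith [mul_lt_mul_of_pos_left h1 hpos,
      mul_le_mul_of_nonneg_left h0.le (sub_nonneg.2 hp1)]

/-- Rounding the coordinates in `S` of a fractional point one after the other. -/
lemma exists_rounding (hirr : ∀ v, ¬ A v v) {p : ℝ} (hp0 : 0 ≤ p) (hp1 : p ≤ 1) {x₀ : V → ℝ}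
    (hx₀ : ∀ v, 0 ≤ x₀ v ∧ x₀ v ≤ 1) (S : Finset V) (hS : ∀ y ∈ S, x₀ y = p) :
    ∃ x : V → ℝ, (∀ v, 0 ≤ x v ∧ x v ≤ 1) ∧ (∀ v ∉ S, x v = x₀ v) ∧
      (∀ v ∈ S, x v = 0 ∨ x v = 1) ∧
      (cutExt A x - cutExt A x₀) ^ 2 + (cutExt A (1 - x) - cutExt A (1 - x₀)) ^ 2 ≤
        ∑ y ∈ S, (deg A y : ℝ) ^ 2 / 2 := by
  induction S using Finset.induction_on with
  | empty => exact ⟨x₀, hx₀, by simp, by simp, by simp⟩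
  | insert y S hy ih =>
    obtain ⟨x, hx, hxS, hx01, hle⟩ := ih fun z hz => hS z (Finset.mem_insert_of_mem hz)
    have hxy : x y = p := by rw [hxS y hy, hS y (Finset.mem_insert_self _ _)]
    have hx' : ∀ v, 0 ≤ (1 - x) v ∧ (1 - x) v ≤ 1 := fun v => by
      have := hx v
      simp only [Pi.sub_apply, Pi.one_apply]
      constructor <;> linarith
    have hD := sq_le_sq' (neg_le_of_abs_le (abs_cutDeriv_le (A := A) hx y))
      (le_of_abs_le (abs_cutDeriv_le hx y))
    have hE := sq_le_sq' (neg_le_of_abs_le (abs_cutDeriv_le (A := A) hx' y))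
      (le_of_abs_le (abs_cutDeriv_le hx' y))
    obtain ⟨t, ht, hbound⟩ := exists_round_le hp0 hp1 (cutExt A x - cutExt A x₀)
      (cutExt A (1 - x) - cutExt A (1 - x₀)) (cutDeriv A x y) (cutDeriv A (1 - x) y)
    refine ⟨Function.update x y t, fun v => ?_, fun v hv => ?_, fun v hv => ?_, ?_⟩
    · by_cases h : v = y
      · subst h
        rcases ht with rfl | rfl <;> simp
      · simpa [h] using hx v
    · rw [Finset.mem_insert, not_or] at hv
      simpa [hv.1] using hxS v hv.2
    · by_cases h : v = y
      · subst h; simpa using ht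
      · simpa [h] using hx01 v (Finset.mem_of_mem_insert_of_ne hv h)
    · rw [cutExt_update hirr, cutExt_compl_update hirr, hxy, Finset.sum_insert hy]
      have e1 : ∀ a b c : ℝ, a + b - c = a - c + b := fun a b c => by ring
      have e2 : ∀ a b c : ℝ, a - b - c = a - c - b := fun a b c => by ring
      rw [e1, e2]
      linarith

lemma dArcs_eq_cutExt {x : V → ℝ} (hx : ∀ v, x v = 0 ∨ x v = 1) :
    (dArcs A (Finset.univ.filter fun v => x v = 1) (Finset.univ.filter fun v => ¬ x v = 1) : ℝ) =
      cutExt A x := by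
  rw [dArcs_eq_sum, cutExt]
  push_cast
  rw [Finset.sum_filter]
  refine Finset.sum_congr rfl fun u _ => ?_
  rw [Finset.sum_filter]
  rcases hx u with hu | hu
  · simp [hu]
  · rw [if_pos hu]
    refine Finset.sum_congr rfl fun v _ => ?_
    rcases hx v with hv | hv <;> simp [hu, hv]

lemma cutExt_eq_sum {X Y : Finset V} (hXY : X ∪ Y = Finset.univ) (hdXY : Disjoint X Y)
    (heX : dArcs A X X = 0) {p : ℝ} {x : V → ℝ} (hx : ∀ y ∈ Y, x y = p) :
    cutExt A x = (∑ v ∈ X, ((1 - p) * (x v * outDeg A v) + p * ((1 - x v) * inDeg A v))) +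
      p * (1 - p) * dArcs A Y Y := by
  have hXX : ∑ u ∈ X, ∑ v ∈ X, (if A u v then (1 : ℝ) else 0) * (x u * (1 - x v)) = 0 :=
    Finset.sum_eq_zero fun u hu => Finset.sum_eq_zero fun v hv => by
      rw [if_neg (not_arc_of_dArcs_eq_zero A heX hu hv), zero_mul]
  have hXYs : ∑ u ∈ X, ∑ v ∈ Y, (if A u v then (1 : ℝ) else 0) * (x u * (1 - x v)) =
      ∑ u ∈ X, (1 - p) * (x u * outDeg A u) := by
    refine Finset.sum_congr rfl fun u hu => ?_
    rw [outDeg_eq_sum hXY hdXY heX hu]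
    push_cast
    rw [Finset.mul_sum, Finset.mul_sum]
    exact Finset.sum_congr rfl fun v hv => by rw [hx v hv]; ring
  have hYX : ∑ u ∈ Y, ∑ v ∈ X, (if A u v then (1 : ℝ) else 0) * (x u * (1 - x v)) =
      ∑ v ∈ X, p * ((1 - x v) * inDeg A v) := by
    rw [Finset.sum_comm]
    refine Finset.sum_congr rfl fun v hv => ?_
    rw [inDeg_eq_sum hXY hdXY heX hv]
    push_cast
    rw [Finset.mul_sum, Finset.mul_sum]
    exact Finset.sum_congr rfl fun u hu => by rw [hx u hu]; ring
  have hYY : ∑ u ∈ Y, ∑ v ∈ Y, (if A u v then (1 : ℝ) else 0) * (x u * (1 - x v)) =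
      p * (1 - p) * dArcs A Y Y := by
    rw [dArcs_eq_sum]
    push_cast
    rw [Finset.mul_sum]
    refine Finset.sum_congr rfl fun u hu => ?_
    rw [Finset.mul_sum]
    exact Finset.sum_congr rfl fun v hv => by rw [hx u hu, hx v hv]; ring
  rw [cutExt, sum_univ_eq_sum_add_sum hXY hdXY]
  simp only [sum_univ_eq_sum_add_sum hXY hdXY (fun v => _ * (_ * (1 - x v))),
    Finset.sum_add_distrib, hXX, hXYs, hYX, hYY]
  ring

/-- If all degrees in `Y` are small, any partition of `X` extends to a bipartition of the digraph
whose two directed cuts are almost as large as their expectations when the vertices of `Y` are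
placed into the first part independently with probability `p`. -/
lemma exists_bipartition (hirr : ∀ v, ¬ A v v) {X Y : Finset V} (hXY : X ∪ Y = Finset.univ)
    (hdXY : Disjoint X Y) (heX : dArcs A X X = 0) {m : ℕ}
    (hm : m = dArcs A Finset.univ Finset.univ) {ε : ℝ} (hε : 0 < ε)
    (hdeg : ∀ y ∈ Y, (deg A y : ℝ) ≤ ε ^ 2 * m / 4) {p : ℝ} (hp0 : 0 ≤ p) (hp1 : p ≤ 1)
    (X₁ : Finset V) {c : ℝ}
    (h₁ : c * m ≤ (∑ v ∈ X, if v ∈ X₁ then (1 - p) * (outDeg A v : ℝ) else p * inDeg A v) +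
      p * (1 - p) * dArcs A Y Y)
    (h₂ : c * m ≤ (∑ v ∈ X, if v ∈ X₁ then (1 - p) * (inDeg A v : ℝ) else p * outDeg A v) +
      p * (1 - p) * dArcs A Y Y) :
    ∃ V₁ V₂ : Finset V, V₁ ∪ V₂ = Finset.univ ∧ Disjoint V₁ V₂ ∧
      (c - ε) * m ≤ min (dArcs A V₁ V₂ : ℝ) (dArcs A V₂ V₁ : ℝ) := by
  set x₀ : V → ℝ := fun v => if v ∈ Y then p else if v ∈ X₁ then 1 else 0 with hx₀
  have hY : ∀ y ∈ Y, x₀ y = p := fun y hy => by simp [hx₀, hy]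
  have hX : ∀ v ∈ X, v ∉ Y := fun v hv => Finset.disjoint_left.1 hdXY hv
  obtain ⟨x, -, hxY, hx01, hle⟩ := exists_rounding hirr hp0 hp1 (x₀ := x₀) (A := A)
    (fun v => by simp only [hx₀]; split_ifs <;> constructor <;> simp [hp0, hp1]) Y hY
  have hx : ∀ v, x v = 0 ∨ x v = 1 := by
    intro v
    by_cases hv : v ∈ Y
    · exact hx01 v hv
    · rw [hxY v hv]
      simp only [hx₀, hv, if_false]
      split_ifs <;> simp
  have hvar : ∑ y ∈ Y, (deg A y : ℝ) ^ 2 / 2 ≤ (ε * m) ^ 2 := by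
    have hsum : ∑ y ∈ Y, (deg A y : ℝ) ≤ 2 * m := by
      have h1 : ∑ y ∈ Y, deg A y ≤ ∑ y, deg A y :=
        Finset.sum_le_sum_of_subset (Finset.subset_univ _)
      have h2 : ∑ y, deg A y = 2 * m := by
        simp only [deg, Finset.sum_add_distrib]
        rw [← dArcs_univ_eq_sum_outDeg, ← dArcs_univ_eq_sum_inDeg, hm]
        ring
      rw [h2] at h1
      exact_mod_cast h1
    have hK : 0 ≤ ε ^ 2 * m / 8 := by positivity
    calc ∑ y ∈ Y, (deg A y : ℝ) ^ 2 / 2 ≤ ∑ y ∈ Y, ε ^ 2 * m / 8 * deg A y :=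
          Finset.sum_le_sum fun y hy => by
            nlinarith [hdeg y hy, Nat.cast_nonneg (α := ℝ) (deg A y)]
      _ = ε ^ 2 * m / 8 * ∑ y ∈ Y, (deg A y : ℝ) := by rw [Finset.mul_sum]
      _ ≤ ε ^ 2 * m / 8 * (2 * m) := mul_le_mul_of_nonneg_left hsum hK
      _ ≤ (ε * m) ^ 2 := by nlinarith [sq_nonneg (ε * m)]
  have hεm : 0 ≤ ε * m := by positivity
  have hdev₁ : |cutExt A x - cutExt A x₀| ≤ ε * m :=
    abs_le_of_sq_le_sq (by nlinarith [sq_nonneg (cutExt A (1 - x) - cutExt A (1 - x₀))]) hεm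
  have hdev₂ : |cutExt A (1 - x) - cutExt A (1 - x₀)| ≤ ε * m :=
    abs_le_of_sq_le_sq (by nlinarith [sq_nonneg (cutExt A x - cutExt A x₀)]) hεm
  have hcut₁ : c * m ≤ cutExt A x₀ := by
    rw [cutExt_eq_sum hXY hdXY heX hY]
    refine h₁.trans_eq (congrArg (· + _) (Finset.sum_congr rfl fun v hv => ?_))
    by_cases h : v ∈ X₁ <;> simp [hx₀, hX v hv, h]
  have hcut₂ : c * m ≤ cutExt A (1 - x₀) := by
    rw [cutExt_eq_sum hXY hdXY heX (p := 1 - p) fun y hy => by simp [hY y hy]]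
    have e : (1 - p) * (1 - (1 - p)) = p * (1 - p) := by ring
    rw [e]
    refine h₂.trans_eq (congrArg (· + _) (Finset.sum_congr rfl fun v hv => ?_))
    by_cases h : v ∈ X₁ <;> simp [hx₀, hX v hv, h]
  refine ⟨Finset.univ.filter fun v => x v = 1, Finset.univ.filter fun v => ¬ x v = 1,
    Finset.filter_union_filter_not_eq _ _, Finset.disjoint_filter_filter_not _ _ _, ?_⟩
  have hswap : dArcs A (Finset.univ.filter fun v => ¬ x v = 1)
      (Finset.univ.filter fun v => x v = 1) = dArcs A
      (Finset.univ.filter fun v => (1 - x) v = 1) (Finset.univ.filter fun v => ¬ (1 - x) v = 1) := by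
    congr 1 <;> ext v <;> rcases hx v with h | h <;> simp [h]
  rw [hswap, dArcs_eq_cutExt hx, dArcs_eq_cutExt (fun v => by
    rcases hx v with h | h <;> simp [h])]
  rw [abs_le] at hdev₁ hdev₂
  refine le_min ?_ ?_ <;> linarith

end Rounding

section Signing

variable {ι : Type*} [DecidableEq ι]

/-- Terms smaller than `θ` can be signed so as to bring a starting value `t` strictly within
distance `θ` of `0`, as soon as `|t|` does not exceed their total by `θ` or more. -/
lemma exists_signing (s : ι → ℤ) (θ : ℤ) (S : Finset ι) (hs : ∀ i ∈ S, 0 ≤ s i ∧ s i < θ) (t : ℤ)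
    (ht : |t| < θ + ∑ i ∈ S, s i) :
    ∃ B ⊆ S, |t + ∑ i ∈ S, if i ∈ B then s i else - s i| < θ := by
  induction S using Finset.induction_on generalizing t with
  | empty => exact ⟨∅, subset_rfl, by simpa using ht⟩
  | insert a S ha ih =>
    have hsa := hs a (Finset.mem_insert_self _ _)
    have hS : ∀ i ∈ S, 0 ≤ s i ∧ s i < θ := fun i hi => hs i (Finset.mem_insert_of_mem hi)
    have hsum : 0 ≤ ∑ i ∈ S, s i := Finset.sum_nonneg fun i hi => (hS i hi).1
    rw [Finset.sum_insert ha] at ht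
    rw [abs_lt] at ht
    rcases le_or_gt 0 t with h | h
    · obtain ⟨B, hBS, hB⟩ := ih hS (t - s a) (by rw [abs_lt]; constructor <;> linarith)
      refine ⟨B, hBS.trans (Finset.subset_insert _ _), ?_⟩
      rw [Finset.sum_insert ha, if_neg fun h => ha (hBS h), ← add_assoc]
      exact hB
    · obtain ⟨B, hBS, hB⟩ := ih hS (t + s a) (by rw [abs_lt]; constructor <;> linarith)
      refine ⟨insert a B, Finset.insert_subset_insert _ hBS, ?_⟩
      rw [Finset.sum_insert ha, if_pos (Finset.mem_insert_self _ _), ← add_assoc]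
      convert hB using 3
      refine Finset.sum_congr rfl fun i hi => ?_
      have : i ≠ a := fun h => ha (h ▸ hi)
      simp [this]

/-- If all values on a set of size `2k + 1` differ by less than `θ` and every signed sum has
absolute value at least `θ + g`, then any `k + 1` values exceed the other `k` by `θ + g`. -/
lemma le_sum_sdiff_sub_sum {s : ι → ℤ} {θ g : ℤ} {k : ℕ} {S : Finset ι} (hg : 0 ≤ g)
    (hcard : S.card = 2 * k + 1) (hs : ∀ i ∈ S, 0 ≤ s i)
    (hclose : ∀ i ∈ S, ∀ j ∈ S, s i - s j < θ)
    (hsign : ∀ U ⊆ S, θ + g ≤ |∑ i ∈ S \ U, s i - ∑ i ∈ U, s i|)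
    {U : Finset ι} (hU : U ⊆ S) (hUk : U.card = k) :
    θ + g ≤ ∑ i ∈ S \ U, s i - ∑ i ∈ U, s i := by
  have hθ : 0 < θ := by
    obtain ⟨i, hi⟩ : S.Nonempty := Finset.card_pos.1 (by omega)
    simpa using hclose i hi i hi
  by_contra hlt
  have hUneg : ∑ i ∈ S \ U, s i < ∑ i ∈ U, s i := by
    rcases le_abs'.1 (hsign U hU) with h | h <;> linarith
  obtain ⟨T, hT, hmin⟩ := Finset.exists_min_image
    ((S.powersetCard k).filter fun T => ∑ i ∈ S \ T, s i < ∑ i ∈ T, s i) (fun T => ∑ i ∈ T, s i)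
    ⟨U, Finset.mem_filter.2 ⟨Finset.mem_powersetCard.2 ⟨hU, hUk⟩, hUneg⟩⟩
  simp only [Finset.mem_filter, Finset.mem_powersetCard] at hT hmin
  obtain ⟨⟨hTS, hTk⟩, hTneg⟩ := hT
  have htot : ∀ R ⊆ S, ∑ i ∈ S \ R, s i = ∑ i ∈ S, s i - ∑ i ∈ R, s i := fun R hR => by
    rw [← Finset.sum_sdiff hR]; ring
  by_cases hex : ∃ x ∈ T, ∃ y ∈ S \ T, s y < s x
  · obtain ⟨x, hx, y, hy, hxy⟩ := hex
    rw [Finset.mem_sdiff] at hy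
    have hyT : y ∉ T.erase x := fun h => hy.2 (Finset.mem_of_mem_erase h)
    have hsub : insert y (T.erase x) ⊆ S :=
      Finset.insert_subset hy.1 ((Finset.erase_subset _ _).trans hTS)
    have hsum : ∑ i ∈ insert y (T.erase x), s i = ∑ i ∈ T, s i - s x + s y := by
      rw [Finset.sum_insert hyT, ← Finset.add_sum_erase T s hx]; ring
    have hc : (insert y (T.erase x)).card = k := by
      rw [Finset.card_insert_of_notMem hyT, Finset.card_erase_of_mem hx, hTk]
      have := Finset.card_pos.2 ⟨x, hx⟩
      omega
    have hTle := hsign T hTS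
    have hle := hsign _ hsub
    have hd := hclose x (hTS hx) y hy.1
    have hm := hmin (insert y (T.erase x))
    rw [htot _ hsub, hsum] at hle hm
    rw [htot T hTS] at hTle hTneg
    rw [abs_of_neg (by linarith)] at hTle
    have := hm ⟨⟨hsub, hc⟩, by rcases le_abs'.1 hle with h | h <;> linarith⟩
    linarith
  · push Not at hex
    have hck : (S \ T).card = k + 1 := by
      rw [Finset.card_sdiff_of_subset hTS, hcard, hTk]; omega
    have h : ∑ x ∈ T, ∑ _y ∈ S \ T, s x ≤ ∑ _x ∈ T, ∑ y ∈ S \ T, s y :=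
      Finset.sum_le_sum fun x hx => Finset.sum_le_sum fun y hy => hex x hx y hy
    simp only [Finset.sum_const, hck, hTk, nsmul_eq_mul, ← Finset.mul_sum] at h
    have h0 : 0 ≤ ∑ y ∈ S \ T, s y :=
      Finset.sum_nonneg fun y hy => hs y (Finset.mem_sdiff.1 hy).1
    push_cast at h
    nlinarith

end Signing

section Indices

lemma sum_Icc_split {M : Type*} [AddCommMonoid M] (f : ℕ → M) {k : ℕ} (hk : 1 ≤ k) :
    ∑ j ∈ Finset.Icc 1 (2 * k + 1), f j = ∑ j ∈ Finset.Icc k (2 * k - 1), f j +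
      (∑ j ∈ Finset.Icc 1 (k - 1), f j + f (2 * k) + f (2 * k + 1)) := by
  have h : Finset.Icc 1 (2 * k - 1) = Finset.Icc k (2 * k - 1) ∪ Finset.Icc 1 (k - 1) := by
    ext j; simp only [Finset.mem_union, Finset.mem_Icc]; omega
  have hd : Disjoint (Finset.Icc k (2 * k - 1)) (Finset.Icc 1 (k - 1)) := by
    rw [Finset.disjoint_left]; intro j; simp only [Finset.mem_Icc]; omega
  have h2 : 2 * k = 2 * k - 1 + 1 := by omega
  rw [Finset.sum_Icc_succ_top (by omega)]
  conv_lhs => rw [h2]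
  rw [Finset.sum_Icc_succ_top (by omega), h, Finset.sum_union hd, ← h2]
  simp only [add_assoc]

/-- Among the first `2k - 1` terms of an antitone sequence there are `k` of the same colour, and
they dominate the last `k` of these terms. -/
lemma exists_monochromatic {f : ℕ → ℤ} {k : ℕ} (hk : 1 ≤ k) (P : ℕ → Prop)
    (hf : ∀ i ∈ Finset.Icc 1 (2 * k + 1), ∀ j ∈ Finset.Icc 1 (2 * k + 1), i ≤ j → f j ≤ f i) :
    ∃ J ⊆ Finset.Icc 1 (2 * k + 1), J.card = k ∧ ((∀ j ∈ J, P j) ∨ ∀ j ∈ J, ¬ P j) ∧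
      ∑ j ∈ Finset.Icc k (2 * k - 1), f j ≤ ∑ j ∈ J, f j := by
  classical
  obtain ⟨J, hJ, hJk, hmono⟩ : ∃ J ⊆ Finset.Icc 1 (2 * k - 1), J.card = k ∧
      ((∀ j ∈ J, P j) ∨ ∀ j ∈ J, ¬ P j) := by
    have hc := Finset.card_filter_add_card_filter_not (s := Finset.Icc 1 (2 * k - 1)) P
    rw [Nat.card_Icc] at hc
    rcases le_or_gt k ((Finset.Icc 1 (2 * k - 1)).filter P).card with h | h
    · obtain ⟨J, hJ, hJk⟩ := Finset.exists_subset_card_eq h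
      exact ⟨J, hJ.trans (Finset.filter_subset _ _), hJk,
        Or.inl fun j hj => (Finset.mem_filter.1 (hJ hj)).2⟩
    · obtain ⟨J, hJ, hJk⟩ := Finset.exists_subset_card_eq
        (s := (Finset.Icc 1 (2 * k - 1)).filter fun j => ¬ P j) (n := k) (by omega)
      exact ⟨J, hJ.trans (Finset.filter_subset _ _), hJk,
        Or.inr fun j hj => (Finset.mem_filter.1 (hJ hj)).2⟩
  refine ⟨J, hJ.trans (Finset.Icc_subset_Icc_right (by omega)), hJk, hmono, ?_⟩
  set Q := Finset.Icc k (2 * k - 1) with hQ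
  have hQk : Q.card = k := by rw [hQ, Nat.card_Icc]; omega
  have hcard : (J \ Q).card = (Q \ J).card := Finset.card_sdiff_comm (hJk.trans hQk.symm)
  have h1 : ∑ j ∈ Q \ J, f j ≤ (Q \ J).card • f k :=
    Finset.sum_le_card_nsmul _ _ _ fun j hj => by
      have := Finset.mem_Icc.1 (Finset.mem_sdiff.1 hj).1
      exact hf k (by simp; omega) j (by simp; omega) this.1
  have h2 : (J \ Q).card • f k ≤ ∑ j ∈ J \ Q, f j :=
    Finset.card_nsmul_le_sum _ _ _ fun j hj => by
      have hj' := Finset.mem_sdiff.1 hj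
      have h1 := Finset.mem_Icc.1 (hJ hj'.1)
      have h2 := hj'.2
      rw [hQ, Finset.mem_Icc] at h2
      exact hf j (by simp; omega) k (by simp; omega) (by omega)
  rw [← Finset.sum_inter_add_sum_sdiff Q J, ← Finset.sum_inter_add_sum_sdiff J Q,
    Finset.inter_comm J Q]
  rw [hcard] at h2
  linarith

end Indices

section Gap

variable {V : Type} [Fintype V] [DecidableEq V] {A : V → V → Prop} [DecidableRel A]
  {X Y : Finset V}

lemma le_abs_signed_sum (hXY : X ∪ Y = Finset.univ) (hdXY : Disjoint X Y)
    (heX : dArcs A X X = 0) {θ : ℤ}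
    (hθ : θ ∈ lowerBounds {t : ℤ | ∃ X₁ ⊆ X, t = |gap A X₁ (X \ X₁) Y|}) (B : Finset V) :
    θ ≤ |∑ x ∈ X, if x ∈ B then sVal A x else - sVal A x| := by
  refine hθ ⟨X.filter fun x => x ∈ B ↔ inDeg A x ≤ outDeg A x, Finset.filter_subset _ _, ?_⟩
  rw [gap_eq_sum hXY hdXY heX (Finset.filter_subset _ _)]
  congr 1
  refine Finset.sum_congr rfl fun x hx => ?_
  by_cases hB : x ∈ B <;> by_cases hp : inDeg A x ≤ outDeg A x <;>
    simp only [Finset.mem_filter, hx, hB, hp, sVal] <;> simp <;> omega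

lemma add_le_abs_sum_sdiff_sub_sum (hXY : X ∪ Y = Finset.univ) (hdXY : Disjoint X Y)
    (heX : dArcs A X X = 0) {θ : ℤ}
    (hθ : θ ∈ lowerBounds {t : ℤ | ∃ X₁ ⊆ X, t = |gap A X₁ (X \ X₁) Y|})
    {S : Finset V} (hS : S ⊆ X) (hsmall : ∀ x ∈ X \ S, sVal A x < θ) {U : Finset V}
    (hU : U ⊆ S) :
    θ + ∑ x ∈ X \ S, sVal A x ≤ |∑ x ∈ S \ U, sVal A x - ∑ x ∈ U, sVal A x| := by
  by_contra! hlt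
  obtain ⟨B, hB, hBlt⟩ := exists_signing (sVal A) θ (X \ S)
    (fun x hx => ⟨sVal_nonneg x, hsmall x hx⟩) _ hlt
  refine absurd (le_abs_signed_sum hXY hdXY heX hθ (B ∪ S \ U)) (not_le.2 ?_)
  rw [← Finset.sum_sdiff hS, ← Finset.sum_sdiff hU]
  have h1 : ∑ x ∈ X \ S, (if x ∈ B ∪ S \ U then sVal A x else - sVal A x) =
      ∑ x ∈ X \ S, if x ∈ B then sVal A x else - sVal A x :=
    Finset.sum_congr rfl fun x hx => by simp [(Finset.mem_sdiff.1 hx).2]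
  have h2 : ∑ x ∈ S \ U, (if x ∈ B ∪ S \ U then sVal A x else - sVal A x) =
      ∑ x ∈ S \ U, sVal A x :=
    Finset.sum_congr rfl fun x hx => if_pos (Finset.mem_union_right _ hx)
  have h3 : ∑ x ∈ U, (if x ∈ B ∪ S \ U then sVal A x else - sVal A x) =
      ∑ x ∈ U, - sVal A x :=
    Finset.sum_congr rfl fun x hx => if_neg fun h => by
      rcases Finset.mem_union.1 h with h | h
      · exact (Finset.mem_sdiff.1 (hB h)).2 (hU hx)
      · exact (Finset.mem_sdiff.1 h).2 hx
  rw [h1, h2, h3, Finset.sum_neg_distrib, ← sub_eq_add_neg, add_comm]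
  exact hBlt

end Gap

lemma sum_ite_subset {V : Type*} [DecidableEq V] {X R : Finset V} (hR : R ⊆ X)
    (f : V → ℝ) :
    ∑ v ∈ X, (if v ∈ R then f v else 0) = ∑ v ∈ R, f v := by
  rw [Finset.sum_ite_mem, Finset.inter_eq_right.2 hR]

section Cuts

variable {V : Type} [Fintype V] [DecidableEq V] {A : V → V → Prop} [DecidableRel A]
  {X Y : Finset V}

/-- Lower bound for the expected first cut, when the vertices of `B` send the larger part of their
arcs along it, and those of `U ⊆ B` do so in the direction favoured by `p`. -/
lemma le_expected_cut {p q : ℝ} (hq : 0 ≤ q) (hp₁ : 1 / 2 - q ≤ p) (hp₂ : p ≤ 1 / 2 + q)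
    {U B : Finset V} (hUB : U ⊆ B) (hBX : B ⊆ X)
    (hU : ∀ v ∈ U, if inDeg A v ≤ outDeg A v then 1 / 2 + q ≤ 1 - p else 1 / 2 + q ≤ p) :
    (1 / 2 - q) * ((∑ v ∈ X, ((deg A v : ℝ) - (sVal A v : ℝ))) / 2 + ∑ v ∈ B, (sVal A v : ℝ)) +
        2 * q * ∑ v ∈ U, (sVal A v : ℝ) ≤
      ∑ v ∈ X, if v ∈ X.filter (fun x => x ∈ B ↔ inDeg A x ≤ outDeg A x) then
        (1 - p) * (outDeg A v : ℝ) else p * inDeg A v := by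
  rw [← sum_ite_subset hBX, ← sum_ite_subset (hUB.trans hBX), Finset.sum_div,
    ← Finset.sum_add_distrib, Finset.mul_sum, Finset.mul_sum, ← Finset.sum_add_distrib]
  refine Finset.sum_le_sum fun v hv => ?_
  have ho : (0 : ℝ) ≤ outDeg A v := Nat.cast_nonneg _
  have hi : (0 : ℝ) ≤ inDeg A v := Nat.cast_nonneg _
  simp only [Finset.mem_filter, hv, true_and, deg, sVal]
  push_cast
  by_cases hp : inDeg A v ≤ outDeg A v
  · have hp' : (inDeg A v : ℝ) ≤ outDeg A v := by exact_mod_cast hp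
    rw [max_eq_left (by linarith)]
    by_cases hB : v ∈ B
    · by_cases hvU : v ∈ U
      · have := hU v hvU
        simp only [hp, if_true] at this
        simp only [hp, hB, hvU, if_true]
        nlinarith
      · simp only [hp, hB, hvU, if_true, if_false]
        nlinarith
    · have hvU : v ∉ U := fun h => hB (hUB h)
      simp only [hp, hB, hvU, if_false, iff_true]
      nlinarith
  · have hp' : (outDeg A v : ℝ) ≤ inDeg A v := by exact_mod_cast (not_le.1 hp).le
    rw [max_eq_right (by linarith)]
    by_cases hB : v ∈ B
    · by_cases hvU : v ∈ U
      · have := hU v hvU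
        simp only [hp, if_false] at this
        simp only [hp, hB, hvU, if_true, iff_false, not_true, if_false]
        nlinarith
      · simp only [hp, hB, hvU, if_true, iff_false, not_true, if_false]
        nlinarith
    · have hvU : v ∉ U := fun h => hB (hUB h)
      simp only [hp, hB, hvU, if_false, if_true]
      nlinarith

/-- Lower bound for the expected second cut, along which the vertices outside `B` send the larger
part of their arcs. -/
lemma le_expected_cut_compl {p q : ℝ} (hp₁ : 1 / 2 - q ≤ p) (hp₂ : p ≤ 1 / 2 + q)
    (B : Finset V) :
    (1 / 2 - q) *
        ((∑ v ∈ X, ((deg A v : ℝ) - (sVal A v : ℝ))) / 2 + ∑ v ∈ X \ B, (sVal A v : ℝ)) ≤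
      ∑ v ∈ X, if v ∈ X.filter (fun x => x ∈ B ↔ inDeg A x ≤ outDeg A x) then
        (1 - p) * (inDeg A v : ℝ) else p * outDeg A v := by
  rw [← sum_ite_subset Finset.sdiff_subset, Finset.sum_div, ← Finset.sum_add_distrib,
    Finset.mul_sum]
  refine Finset.sum_le_sum fun v hv => ?_
  have ho : (0 : ℝ) ≤ outDeg A v := Nat.cast_nonneg _
  have hi : (0 : ℝ) ≤ inDeg A v := Nat.cast_nonneg _
  simp only [Finset.mem_filter, Finset.mem_sdiff, hv, true_and, deg, sVal]
  push_cast
  by_cases hp : inDeg A v ≤ outDeg A v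
  · have hp' : (inDeg A v : ℝ) ≤ outDeg A v := by exact_mod_cast hp
    rw [max_eq_left (by linarith)]
    by_cases hB : v ∈ B <;> simp [hp, hB] <;> nlinarith
  · have hp' : (outDeg A v : ℝ) ≤ inDeg A v := by exact_mod_cast (not_le.1 hp).le
    rw [max_eq_right (by linarith)]
    by_cases hB : v ∈ B <;> simp [hp, hB] <;> nlinarith

/-- With a uniformly random placement of `Y` and a partition of `X` of minimum gap, the cuts are
large unless the number of arcs is less than `(2d - 1)θ`. -/
lemma exists_bipartition_of_gap_le (hirr : ∀ v, ¬ A v v) (hXY : X ∪ Y = Finset.univ)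
    (hdXY : Disjoint X Y) (heX : dArcs A X X = 0) {m : ℕ}
    (hm : m = dArcs A Finset.univ Finset.univ) {ε : ℝ} (hε : 0 < ε)
    (hdeg : ∀ y ∈ Y, (deg A y : ℝ) ≤ ε ^ 2 * m / 4) {d : ℝ} (hd : 1 ≤ d)
    {X₁ : Finset V} (hX₁ : X₁ ⊆ X) (hgap : (2 * d - 1) * |(gap A X₁ (X \ X₁) Y : ℝ)| ≤ m) :
    ∃ V₁ V₂ : Finset V, V₁ ∪ V₂ = Finset.univ ∧ Disjoint V₁ V₂ ∧
      ((d - 1) / (2 * (2 * d - 1)) - ε) * m ≤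
        min (dArcs A V₁ V₂ : ℝ) (dArcs A V₂ V₁ : ℝ) := by
  have hm' : (m : ℝ) = dArcs A Y Y + ∑ x ∈ X, ((outDeg A x : ℝ) + inDeg A x) := by
    rw [hm, dArcs_univ_eq hXY hdXY heX]
    push_cast [deg]
    rfl
  set E₁ : ℝ := ∑ v ∈ X, if v ∈ X₁ then (outDeg A v : ℝ) else inDeg A v with hE₁
  set E₂ : ℝ := ∑ v ∈ X, if v ∈ X₁ then (inDeg A v : ℝ) else outDeg A v with hE₂
  have hsum : E₁ + E₂ = ∑ x ∈ X, ((outDeg A x : ℝ) + inDeg A x) := by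
    rw [hE₁, hE₂, ← Finset.sum_add_distrib]
    exact Finset.sum_congr rfl fun v _ => by split_ifs <;> ring
  have hdiff : E₁ - E₂ = gap A X₁ (X \ X₁) Y := by
    rw [gap_eq_sum hXY hdXY heX hX₁, hE₁, hE₂, ← Finset.sum_sub_distrib]
    push_cast
    exact Finset.sum_congr rfl fun v _ => by split_ifs <;> ring
  have hd' : 0 < 2 * d - 1 := by linarith
  have hc : (d - 1) / (2 * (2 * d - 1)) * m = m / 4 - m / (2 * d - 1) / 4 := by
    rw [div_div, div_mul_eq_mul_div, div_sub_div _ _ four_ne_zero (by positivity),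
      div_eq_div_iff (by positivity) (by positivity)]
    ring
  have hle : |E₁ - E₂| ≤ m / (2 * d - 1) := by
    rw [le_div_iff₀ hd', hdiff]; linarith
  rw [abs_le] at hle
  refine exists_bipartition hirr hXY hdXY heX hm hε hdeg (p := 1 / 2) (by norm_num) (by norm_num)
    X₁ ?_ ?_
  · have : (∑ v ∈ X, if v ∈ X₁ then (1 - 1 / 2) * (outDeg A v : ℝ) else 1 / 2 * inDeg A v) =
        1 / 2 * E₁ := by
      rw [hE₁, Finset.mul_sum]
      exact Finset.sum_congr rfl fun v _ => by split_ifs <;> ring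
    rw [this, hc]; linarith
  · have : (∑ v ∈ X, if v ∈ X₁ then (1 - 1 / 2) * (inDeg A v : ℝ) else 1 / 2 * outDeg A v) =
        1 / 2 * E₂ := by
      rw [hE₂, Finset.mul_sum]
      exact Finset.sum_congr rfl fun v _ => by split_ifs <;> ring
    rw [this, hc]; linarith

end Cuts

section Arithmetic

/-- The first expected cut for `q = 1 / (2d)`: here `u` and `w` are the totals of `s` over the two
classes of `X'`, `Q` and `N` those in the assumed upper bound for `b`. -/
lemma cut_bound_of_le {d b e g u w Q N m : ℝ} (hd : 1 < d)
    (hm : m = e + 2 * b + g + u + w) (hQ : Q ≤ u) (hN : u + w = Q + N)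
    (hb : b ≤ (d ^ 2 + 2 * d - 1) / (d - 1) * Q - d * N + (d - 1) * g + (d - 1) / (2 * d) * e) :
    (d - 1) / (2 * (2 * d - 1)) * m ≤
      (1 / 2 - 1 / (2 * d)) * (b + (u + g)) + 2 * (1 / (2 * d)) * u +
        (1 / 4 - (1 / (2 * d)) ^ 2) * e := by
  have h1 : 0 < d - 1 := by linarith
  have h2 : 0 < 2 * d - 1 := by linarith
  have h3 : 0 < d := by linarith
  have hcoef : 0 ≤ (d ^ 2 + 2 * d - 1) / (d - 1) := div_nonneg (by nlinarith) h1.le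
  have hmono := mul_le_mul_of_nonneg_left hQ hcoef
  have hwN : d * w ≤ d * N := mul_le_mul_of_nonneg_left (by linarith) h3.le
  have hb' : 0 ≤ (d ^ 2 + 2 * d - 1) / (d - 1) * u - d * w + (d - 1) * g +
      (d - 1) / (2 * d) * e - b := by linarith
  have hpos : 0 ≤ (d - 1) / (2 * d * (2 * d - 1)) := by positivity
  have key : (1 / 2 - 1 / (2 * d)) * (b + (u + g)) + 2 * (1 / (2 * d)) * u +
        (1 / 4 - (1 / (2 * d)) ^ 2) * e - (d - 1) / (2 * (2 * d - 1)) * m =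
      (d - 1) / (2 * d * (2 * d - 1)) * ((d ^ 2 + 2 * d - 1) / (d - 1) * u - d * w +
        (d - 1) * g + (d - 1) / (2 * d) * e - b) := by
    rw [hm]
    field_simp
    ring
  have := mul_nonneg hpos hb'
  linarith

/-- The second expected cut for `q = 1 / (2d)`. -/
lemma cut_bound_compl {d b e g u w θ m : ℝ} (hd : 1 < d) (he : 0 ≤ e)
    (hm : m = e + 2 * b + g + u + w) (hθm : m < (2 * d - 1) * θ) (hθ : θ + g ≤ w - u) :
    (d - 1) / (2 * (2 * d - 1)) * m ≤
      (1 / 2 - 1 / (2 * d)) * (b + w) + (1 / 4 - (1 / (2 * d)) ^ 2) * e := by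
  have h1 : 0 < d - 1 := by linarith
  have h2 : 0 < 2 * d - 1 := by linarith
  have h3 : 0 < d := by linarith
  have hpos : 0 ≤ (d - 1) / (2 * d * (2 * d - 1)) := by positivity
  have he' : 0 ≤ (d - 1) / (2 * d) * e := by positivity
  have hz : 0 ≤ d * (w - u - g) - b - w + (d - 1) / (2 * d) * e := by nlinarith
  have key : (1 / 2 - 1 / (2 * d)) * (b + w) + (1 / 4 - (1 / (2 * d)) ^ 2) * e -
      (d - 1) / (2 * (2 * d - 1)) * m =
      (d - 1) / (2 * d * (2 * d - 1)) * (d * (w - u - g) - b - w + (d - 1) / (2 * d) * e) := by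
    rw [hm]
    field_simp
    ring
  have := mul_nonneg hpos hz
  linarith

end Arithmetic

/-- Lemma 3.2(2). -/
theorem stmt9 {V : Type} [Fintype V] [DecidableEq V] (A : V → V → Prop) [DecidableRel A]
    (hirr : ∀ v, ¬ A v v)
    (m : ℕ) (hm : m = dArcs A Finset.univ Finset.univ)
    (d : ℕ) (hd : 4 ≤ d) (hout : ∀ x, d ≤ outDeg A x)
    (X Y : Finset V) (hXY : X ∪ Y = Finset.univ) (hdXY : Disjoint X Y)
    (heX : dArcs A X X = 0)
    (θ : ℤ) (hθ : IsLeast {t : ℤ | ∃ X₁ ⊆ X, t = |gap A X₁ (X \ X₁) Y|} θ)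
    (X' : Finset V) (hX' : X' = X.filter fun x => θ ≤ sVal A x)
    (g : ℤ) (hg : g = ∑ x ∈ X \ X', sVal A x)
    (b : ℝ) (hb : b = (∑ x ∈ X, ((deg A x : ℝ) - (sVal A x : ℝ))) / 2)
    (k : ℕ) (hk : 1 ≤ k) (hcard : X'.card = 2 * k + 1)
    (ε : ℝ) (hε : 0 < ε) (hdeg : ∀ y ∈ Y, (deg A y : ℝ) ≤ ε ^ 2 * m / 4)
    :
    (∃ V₁ V₂ : Finset V, V₁ ∪ V₂ = Finset.univ ∧ Disjoint V₁ V₂ ∧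
        (((d : ℝ) - 1) / (2 * (2 * (d : ℝ) - 1)) - ε) * m ≤
          min (dArcs A V₁ V₂ : ℝ) (dArcs A V₂ V₁ : ℝ)) ∨
      ∀ v : ℕ → V,
          X' = (Finset.Icc 1 (2 * k + 1)).image v →
          Set.InjOn v ↑(Finset.Icc 1 (2 * k + 1)) →
          (∀ i ∈ Finset.Icc 1 (2 * k + 1), ∀ j ∈ Finset.Icc 1 (2 * k + 1), i ≤ j →
            sVal A (v j) ≤ sVal A (v i)) →
        ((d : ℝ) ^ 2 + 2 * (d : ℝ) - 1) / ((d : ℝ) - 1) *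
            (∑ j ∈ Finset.Icc k (2 * k - 1), (sVal A (v j) : ℝ)) -
          (d : ℝ) * ((∑ j ∈ Finset.Icc 1 (k - 1), (sVal A (v j) : ℝ)) +
            (sVal A (v (2 * k)) : ℝ) + (sVal A (v (2 * k + 1)) : ℝ)) +
          ((d : ℝ) - 1) * (g : ℝ) + ((d : ℝ) - 1) / (2 * (d : ℝ)) * (dArcs A Y Y : ℝ) < b := by
  refine or_iff_not_imp_left.2 fun hno v hv hinj hanti => ?_
  by_contra! hle
  refine hno ?_
  have hdR : (4 : ℝ) ≤ d := by exact_mod_cast hd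
  obtain ⟨⟨X₁, hX₁, hgap⟩, hmin⟩ := hθ
  rcases le_or_gt ((2 * (d : ℝ) - 1) * θ) m with hbig | hθm
  · refine exists_bipartition_of_gap_le hirr hXY hdXY heX hm hε hdeg (by linarith) hX₁ ?_
    rw [hgap] at hbig
    push_cast at hbig
    exact hbig
  have hX'X : X' ⊆ X := hX' ▸ Finset.filter_subset _ _
  have hlarge : ∀ x ∈ X', θ ≤ sVal A x := fun x hx => by
    rw [hX'] at hx; exact (Finset.mem_filter.1 hx).2
  have hsmall : ∀ x ∈ X \ X', sVal A x < θ := fun x hx => by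
    rw [hX', Finset.mem_sdiff, Finset.mem_filter] at hx
    by_contra! h
    exact hx.2 ⟨hx.1, h⟩
  have hθ0 : 0 ≤ θ := hgap ▸ abs_nonneg _
  have hg0 : 0 ≤ g := hg ▸ Finset.sum_nonneg fun x _ => sVal_nonneg x
  have hlt : ∀ x, sVal A x < 2 * θ := by
    intro x
    have h1 : Fintype.card V * d ≤ m := by
      rw [hm, dArcs_univ_eq_sum_outDeg]
      simpa using Finset.card_nsmul_le_sum Finset.univ (outDeg A) d fun x _ => hout x
    have h2 : ((sVal A x : ℤ) : ℝ) ≤ Fintype.card V := by exact_mod_cast sVal_le_card (A := A) x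
    have h3 : (Fintype.card V : ℝ) * d ≤ m := by exact_mod_cast h1
    have h4 : (0 : ℝ) ≤ θ := by exact_mod_cast hθ0
    have h5 : (sVal A x : ℝ) < 2 * θ := by
      by_contra! h
      nlinarith
    exact_mod_cast h5
  obtain ⟨J, hJ, hJk, hmono, hJsum⟩ := exists_monochromatic (f := fun j => sVal A (v j)) hk
    (fun j => inDeg A (v j) ≤ outDeg A (v j)) hanti
  have hinjJ : Set.InjOn v J := hinj.mono (by exact_mod_cast hJ)
  set U := J.image v with hUdef
  have hUX' : U ⊆ X' := hv ▸ Finset.image_subset_image hJ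
  have hdom : θ + g ≤ ∑ x ∈ X' \ U, sVal A x - ∑ x ∈ U, sVal A x := by
    refine le_sum_sdiff_sub_sum hg0 hcard (fun x _ => sVal_nonneg x)
      (fun x hx y hy => by linarith [hlt x, hlarge y hy]) (fun T hT => ?_) hUX'
      ((Finset.card_image_of_injOn hinjJ).trans hJk)
    rw [hg]
    exact add_le_abs_sum_sdiff_sub_sum hXY hdXY heX hmin hX'X hsmall hT
  have hUsum : ∑ x ∈ U, (sVal A x : ℝ) = ∑ j ∈ J, (sVal A (v j) : ℝ) :=
    Finset.sum_image hinjJ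
  have hX'sum : ∑ x ∈ X', (sVal A x : ℝ) =
      ∑ j ∈ Finset.Icc 1 (2 * k + 1), (sVal A (v j) : ℝ) := by
    rw [hv]; exact Finset.sum_image hinj
  have hUW := Finset.sum_sdiff (f := fun x => (sVal A x : ℝ)) hUX'
  have hgR : (g : ℝ) = ∑ x ∈ X \ X', (sVal A x : ℝ) := by rw [hg]; push_cast; rfl
  have hXs := Finset.sum_sdiff (f := fun x => (sVal A x : ℝ)) hX'X
  have hmR : (m : ℝ) = dArcs A Y Y + 2 * b + g + ∑ x ∈ U, (sVal A x : ℝ) +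
      ∑ x ∈ X' \ U, (sVal A x : ℝ) := by
    rw [hm, dArcs_univ_eq hXY hdXY heX, hb, Finset.sum_sub_distrib]
    push_cast
    linarith
  have hdomR : (θ : ℝ) + g ≤ ∑ x ∈ X' \ U, (sVal A x : ℝ) - ∑ x ∈ U, (sVal A x : ℝ) := by
    exact_mod_cast hdom
  have hsplit := sum_Icc_split (fun j => (sVal A (v j) : ℝ)) hk
  have hcut₁ := cut_bound_of_le (by linarith) hmR (by rw [hUsum]; exact_mod_cast hJsum)
    (by rw [add_comm, hUW, hX'sum, hsplit]) hle
  have hcut₂ := cut_bound_compl (by linarith) (Nat.cast_nonneg _) hmR hθm hdomR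
  set q : ℝ := 1 / (2 * (d : ℝ)) with hq
  have hq0 : 0 ≤ q := by positivity
  have hq1 : q ≤ 1 / 2 := by
    rw [hq, div_le_div_iff₀ (by linarith) (by norm_num)]; linarith
  obtain ⟨p, hp₁, hp₂, hpq, hpU⟩ : ∃ p : ℝ, 1 / 2 - q ≤ p ∧ p ≤ 1 / 2 + q ∧
      p * (1 - p) = 1 / 4 - q ^ 2 ∧ ∀ x ∈ U,
        if inDeg A x ≤ outDeg A x then 1 / 2 + q ≤ 1 - p else 1 / 2 + q ≤ p := by
    rcases hmono with h | h
    · refine ⟨1 / 2 - q, le_rfl, by linarith, by ring, fun x hx => ?_⟩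
      obtain ⟨j, hj, rfl⟩ := Finset.mem_image.1 hx
      rw [if_pos (h j hj)]
      linarith
    · refine ⟨1 / 2 + q, by linarith, le_rfl, by ring, fun x hx => ?_⟩
      obtain ⟨j, hj, rfl⟩ := Finset.mem_image.1 hx
      rw [if_neg (h j hj)]
  set B := U ∪ X \ X' with hB
  have hBX : B ⊆ X := Finset.union_subset (hUX'.trans hX'X) Finset.sdiff_subset
  have hBsum : ∑ x ∈ B, (sVal A x : ℝ) = ∑ x ∈ U, (sVal A x : ℝ) + g := by
    rw [hB, Finset.sum_union (Finset.disjoint_sdiff.mono_left hUX'), hgR]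
  have hXB : X \ B = X' \ U := by
    ext x
    have := @hX'X x
    simp only [hB, Finset.mem_sdiff, Finset.mem_union]
    tauto
  have hexp₁ := le_expected_cut (X := X) hq0 hp₁ hp₂ Finset.subset_union_left hBX hpU
  have hexp₂ := le_expected_cut_compl (A := A) (X := X) hp₁ hp₂ B
  rw [← hb, hBsum] at hexp₁
  rw [← hb, hXB] at hexp₂
  refine exists_bipartition hirr hXY hdXY heX hm hε hdeg (p := p) (by linarith) (by linarith)
    (X.filter fun x => x ∈ B ↔ inDeg A x ≤ outDeg A x) ?_ ?_
  · rw [hpq]; linarith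
  · rw [hpq]; linarith
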